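/- Let G be a potted graph whose cycle C_k has length k, let u be the unique vertex of C_k of degree greater than 2, and suppose G − C_k has connected components T₁, …, T_r, where for each i the vertex v_i ∈ V(T_i) is adjacent to u in G. Then m(G) = m(G,u⁻) + m(G,u⁰) + m(G,u¹), where m(G,u⁻) = m(C_k,u⁻) · ∏_{i=1}^{r} m(T_i), m(G,u⁰) = m(C_k,u⁰) · ∏_{i=1}^{r} m̄(T_i − v_i), and m(G,u¹) = m(C_k,u¹) · ∏_{i=1}^{r} m̄(T_i − v_i) + m(C_k,u⁰) · Σ_{j=1}^{r} [ m̄(T_j − N_{T_j}(v_j)) · ∏_{i ≠ j} m̄(T_i − v_i) ]. -/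

import Mathlib

open scoped Classical

variable {V : Type*}

/-- The number of neighbors of `v` that lie inside the finite set `s`,
i.e. the degree of `v` in the subgraph induced by `s` (when `v ∈ s`). -/
noncomputable def nbrCount (G : SimpleGraph V) (s : Finset V) (v : V) : ℕ :=
  {w ∈ (s : Set V) | G.Adj v w}.ncard

/-- `s` is a dissociation set of `G`: the subgraph induced by `s` has maximum degree at most 1. -/
def IsDissoc (G : SimpleGraph V) (s : Finset V) : Prop :=
  ∀ v ∈ s, nbrCount G s v ≤ 1

/-- The dissociation number of the subgraph of `G` induced by `A`. -/
noncomputable def dissNumOn (G : SimpleGraph V) (A : Set V) : ℕ :=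
  sSup {n | ∃ s : Finset V, ↑s ⊆ A ∧ IsDissoc G s ∧ s.card = n}

/-- `s` is a maximum dissociation set of the subgraph of `G` induced by `A`. -/
def IsMaxDissocOn (G : SimpleGraph V) (A : Set V) (s : Finset V) : Prop :=
  ↑s ⊆ A ∧ IsDissoc G s ∧ s.card = dissNumOn G A

/-- The number of maximum dissociation sets of the subgraph of `G` induced by `A`. -/
noncomputable def numMaxDissocOn (G : SimpleGraph V) (A : Set V) : ℕ :=
  Nat.card {s : Finset V // IsMaxDissocOn G A s}

/-- The dissociation number of `G`. -/
noncomputable def dissNum (G : SimpleGraph V) : ℕ :=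
  dissNumOn G Set.univ

/-- `s` is a maximum dissociation set of `G`. -/
def IsMaxDissoc (G : SimpleGraph V) (s : Finset V) : Prop :=
  IsMaxDissocOn G Set.univ s

/-- The number `m(G)` of maximum dissociation sets of `G`. -/
noncomputable def numMaxDissoc (G : SimpleGraph V) : ℕ :=
  numMaxDissocOn G Set.univ

/-- `m(G[A], u⁻)`: maximum dissociation sets of `G[A]` not containing `u`. -/
noncomputable def numMaxDissocOnAway (G : SimpleGraph V) (A : Set V) (u : V) : ℕ :=
  Nat.card {s : Finset V // IsMaxDissocOn G A s ∧ u ∉ s}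

/-- `m(G[A], u⁰)`: maximum dissociation sets of `G[A]` containing `u` with induced degree 0. -/
noncomputable def numMaxDissocOnDeg0 (G : SimpleGraph V) (A : Set V) (u : V) : ℕ :=
  Nat.card {s : Finset V // IsMaxDissocOn G A s ∧ u ∈ s ∧ nbrCount G s u = 0}

/-- `m(G[A], u¹)`: maximum dissociation sets of `G[A]` containing `u` with induced degree 1. -/
noncomputable def numMaxDissocOnDeg1 (G : SimpleGraph V) (A : Set V) (u : V) : ℕ :=
  Nat.card {s : Finset V // IsMaxDissocOn G A s ∧ u ∈ s ∧ nbrCount G s u = 1}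

/-- `m(G, u⁻)`. -/
noncomputable def numMaxDissocAway (G : SimpleGraph V) (u : V) : ℕ :=
  numMaxDissocOnAway G Set.univ u

/-- `m(G, u⁰)`. -/
noncomputable def numMaxDissocDeg0 (G : SimpleGraph V) (u : V) : ℕ :=
  numMaxDissocOnDeg0 G Set.univ u

/-- `m(G, u¹)`. -/
noncomputable def numMaxDissocDeg1 (G : SimpleGraph V) (u : V) : ℕ :=
  numMaxDissocOnDeg1 G Set.univ u

/-- `m̄`: relative count, `numMaxDissocOn G B` if `dissNumOn G B = dissNumOn G A`, else 0. -/
noncomputable def mbar (G : SimpleGraph V) (A B : Set V) : ℕ :=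
  if dissNumOn G B = dissNumOn G A then numMaxDissocOn G B else 0

/-- `G` is a potted graph whose (unique) cycle has length `k`: `G` is connected and unicyclic
(equivalently, connected with as many edges as vertices), and its cycle has length `k` and
contains a unique vertex of degree larger than 2. -/
def IsPotted (G : SimpleGraph V) (k : ℕ) : Prop :=
  G.Connected ∧ G.edgeSet.ncard = Nat.card V ∧
    ∃ (v : V) (c : G.Walk v v), c.IsCycle ∧ c.length = k ∧
      ∃! u, u ∈ c.support ∧ 2 < (G.neighborSet u).ncard

/-- `T` is the vertex set of a connected component of the subgraph of `G` induced by `A`: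
it is a maximal connected subset of `A`. -/
def IsCompOf (G : SimpleGraph V) (A T : Set V) : Prop :=
  T ⊆ A ∧ T.Nonempty ∧ (G.induce T).Connected ∧
    ∀ T' : Set V, T ⊆ T' → T' ⊆ A → (G.induce T').Connected → T' = T

/-!
Call `C` the root and `T i` the branches, each joined to the root by a single edge `u - v i`.
Every dissociation set is the disjoint union of its traces on the root and the branches, and the
converse can fail only at the edges `u - v i`. As soon as the root has a maximum dissociation set
avoiding `u`, gluing it to maximum dissociation sets of the branches shows that the dissociation
number is additive, so a maximum dissociation set is exactly a compatible family of maximum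
dissociation sets of the pieces, and the three counts are read off from the state of `u`.

For a potted graph, the cycle is induced because only `u` can have further neighbors; a maximum
dissociation set of the cycle misses some vertex, and a rotation moves that vertex to `u`. Finally,
deleting an edge of the cycle leaves a tree, so `u` has only one neighbor in each branch.
-/

section Counting

variable {α ι : Type*} [Finite α]

lemma card_subtype_or_of_disjoint {p q : α → Prop} (hpq : Disjoint p q) :
    Nat.card {x // p x ∨ q x} = Nat.card {x // p x} + Nat.card {x // q x} :=
  (Nat.card_congr (subtypeOrEquiv p q hpq)).trans Nat.card_sum

lemma card_subtype_exists_of_unique [Fintype ι] {p : ι → α → Prop}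
    (hp : ∀ x i j, p i x → p j x → i = j) :
    Nat.card {x // ∃ i, p i x} = ∑ i, Nat.card {x // p i x} := by
  rw [← Nat.card_sigma]
  refine (Nat.card_congr (Equiv.ofBijective
    (fun a : Σ i, {x // p i x} => (⟨a.2, a.1, a.2.2⟩ : {x // ∃ i, p i x})) ⟨?_, ?_⟩)).symm
  · rintro ⟨i, x, hi⟩ ⟨j, y, hj⟩ hxy
    obtain rfl : x = y := congrArg Subtype.val hxy
    obtain rfl := hp x i j hi hj
    rfl
  · rintro ⟨x, i, hi⟩
    exact ⟨⟨i, x, hi⟩, rfl⟩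

end Counting

section NbrCount

variable {G : SimpleGraph V} {s t : Finset V} {w : V}

lemma nbrCount_eq_card_filter (G : SimpleGraph V) (s : Finset V) (w : V) :
    nbrCount G s w = (s.filter (G.Adj w)).card := by
  rw [← Set.ncard_coe_finset, Finset.coe_filter]
  rfl

lemma nbrCount_mono (hst : s ⊆ t) (w : V) : nbrCount G s w ≤ nbrCount G t w := by
  simpa only [nbrCount_eq_card_filter] using Finset.card_le_card (Finset.filter_subset_filter _ hst)

lemma nbrCount_eq_zero_iff : nbrCount G s w = 0 ↔ ∀ x ∈ s, ¬ G.Adj w x := by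
  rw [nbrCount_eq_card_filter, Finset.card_eq_zero, Finset.filter_eq_empty_iff]

lemma nbrCount_eq_ite {b : V} {p : Prop} (h : ∀ x ∈ s, G.Adj w x ↔ x = b ∧ p) :
    nbrCount G s w = if b ∈ s ∧ p then 1 else 0 := by
  rw [nbrCount_eq_card_filter, Finset.filter_congr h]
  split_ifs with hb
  · exact Finset.card_eq_one.2 ⟨b, by ext x; simp only [Finset.mem_filter]; grind⟩
  · exact Finset.card_eq_zero.2 (Finset.filter_eq_empty_iff.2 (by grind))

lemma IsDissoc.mono (ht : IsDissoc G t) (hst : s ⊆ t) : IsDissoc G s :=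
  fun w hw => (nbrCount_mono hst w).trans (ht w (hst hw))

lemma IsDissoc.insert (hs : IsDissoc G s) (hw : nbrCount G s w = 0) :
    IsDissoc G (insert w s) := by
  rw [nbrCount_eq_zero_iff] at hw
  intro x hx
  rw [nbrCount_eq_card_filter, Finset.filter_insert]
  rcases Finset.mem_insert.1 hx with rfl | hx
  · simp [Finset.filter_false_of_mem hw]
  · rw [if_neg fun hxw => hw x hx hxw.symm, ← nbrCount_eq_card_filter]
    exact hs x hx

lemma IsDissoc.exists_notMem (hs : IsDissoc G s) (hw : 1 < (G.neighborSet w).ncard) :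
    ∃ x, x ∉ s := by
  by_contra! hall
  have hle := hs w (hall w)
  simp only [nbrCount, Finset.mem_coe, hall, true_and] at hle
  exact hle.not_gt hw

end NbrCount

section Trace

variable {ι : Type*} {s : Finset V} {A : Set V} {P : ι → Set V} {x : V}

/-- The trace `s ∩ A` of a finite set of vertices on a set of vertices, as a finite set. -/
noncomputable def traceOn (s : Finset V) (A : Set V) : Finset V :=
  s.filter (· ∈ A)

@[simp]
lemma mem_traceOn : x ∈ traceOn s A ↔ x ∈ s ∧ x ∈ A :=
  Finset.mem_filter

lemma mem_traceOn_iff_of_mem (hx : x ∈ A) : x ∈ traceOn s A ↔ x ∈ s :=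
  mem_traceOn.trans (and_iff_left hx)

lemma traceOn_subset (s : Finset V) (A : Set V) : traceOn s A ⊆ s :=
  Finset.filter_subset _ s

lemma coe_traceOn_subset (s : Finset V) (A : Set V) : ↑(traceOn s A) ⊆ A :=
  fun _ hx => (mem_traceOn.1 hx).2

variable [Fintype ι]

lemma card_eq_sum_card_traceOn (hP : ∀ x, ∃! i, x ∈ P i) (s : Finset V) :
    s.card = ∑ i, (traceOn s (P i)).card :=
  calc s.card = ∑ x ∈ s, (Finset.univ.filter fun i => x ∈ P i).card := by
        simp [(Fintype.existsUnique_iff_card_one _).1 (hP _)]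
    _ = ∑ i, (traceOn s (P i)).card :=
        Finset.sum_card_bipartiteAbove_eq_sum_card_bipartiteBelow fun x i => x ∈ P i

lemma nbrCount_eq_sum_nbrCount_traceOn (hP : ∀ x, ∃! i, x ∈ P i) (G : SimpleGraph V)
    (s : Finset V) (w : V) : nbrCount G s w = ∑ i, nbrCount G (traceOn s (P i)) w := by
  simp only [nbrCount_eq_card_filter, card_eq_sum_card_traceOn hP (s.filter _), traceOn,
    Finset.filter_comm]

lemma traceOn_biUnion (hP : ∀ x, ∃! i, x ∈ P i) {f : ι → Finset V} (hf : ∀ i, ↑(f i) ⊆ P i)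
    (i : ι) : traceOn (Finset.univ.biUnion f) (P i) = f i := by
  ext x
  simp only [mem_traceOn, Finset.mem_biUnion, Finset.mem_univ, true_and]
  refine ⟨?_, fun hx => ⟨⟨i, hx⟩, hf i hx⟩⟩
  rintro ⟨⟨j, hj⟩, hx⟩
  rwa [(hP x).unique hx (hf j hj)]

lemma card_subtype_forall_traceOn (hP : ∀ x, ∃! i, x ∈ P i) {Q : ι → Finset V → Prop}
    (hQ : ∀ i t, Q i t → ↑t ⊆ P i) :
    Nat.card {s : Finset V // ∀ i, Q i (traceOn s (P i))} = ∏ i, Nat.card {t // Q i t} := by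
  rw [← Nat.card_pi]
  have htrace (f : ∀ i, {t // Q i t}) (i : ι) :
      traceOn (Finset.univ.biUnion fun j => (f j).1) (P i) = f i :=
    traceOn_biUnion hP (fun j => hQ j _ (f j).2) i
  exact Nat.card_congr
    { toFun s i := ⟨traceOn s.1 (P i), s.2 i⟩
      invFun f := ⟨Finset.univ.biUnion fun i => (f i).1, fun i => by rw [htrace]; exact (f i).2⟩
      left_inv s := by
        ext x
        simpa using fun _ => (hP x).exists
      right_inv f := funext fun i => Subtype.ext (htrace f i) }

lemma card_subtype_traceOn_and_forall_traceOn {C : Set V} {T : ι → Set V}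
    (hP : ∀ x, ∃! o : Option ι, x ∈ o.elim C T) {Q : Finset V → Prop} {R : ι → Finset V → Prop}
    (hQ : ∀ t, Q t → ↑t ⊆ C) (hR : ∀ i t, R i t → ↑t ⊆ T i) :
    Nat.card {s : Finset V // Q (traceOn s C) ∧ ∀ i, R i (traceOn s (T i))} =
      Nat.card {t // Q t} * ∏ i, Nat.card {t // R i t} := by
  simpa [Option.forall, Fintype.prod_option] using
    card_subtype_forall_traceOn hP (Q := fun o => o.elim Q R) (Option.forall.2 ⟨hQ, hR⟩)

end Trace

section DissNum

variable [Finite V] {G : SimpleGraph V} {A B : Set V} {s : Finset V} {w : V}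

lemma bddAbove_card_isDissoc (G : SimpleGraph V) (A : Set V) :
    BddAbove {n | ∃ s : Finset V, ↑s ⊆ A ∧ IsDissoc G s ∧ s.card = n} :=
  (Set.finite_range Finset.card).bddAbove.mono (by rintro _ ⟨s, -, -, rfl⟩; exact ⟨s, rfl⟩)

lemma IsDissoc.card_le_dissNumOn (hs : IsDissoc G s) (hsA : ↑s ⊆ A) : s.card ≤ dissNumOn G A :=
  le_csSup (bddAbove_card_isDissoc G A) ⟨s, hsA, hs, rfl⟩

lemma exists_isMaxDissocOn (G : SimpleGraph V) (A : Set V) : ∃ s, IsMaxDissocOn G A s := by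
  have hne : {n | ∃ s : Finset V, ↑s ⊆ A ∧ IsDissoc G s ∧ s.card = n}.Nonempty :=
    ⟨0, ∅, by simp [IsDissoc]⟩
  exact Nat.sSup_mem hne (bddAbove_card_isDissoc G A)

lemma dissNumOn_mono (G : SimpleGraph V) (hBA : B ⊆ A) : dissNumOn G B ≤ dissNumOn G A := by
  obtain ⟨s, hsB, hs, hcard⟩ := exists_isMaxDissocOn G B
  exact hcard ▸ hs.card_le_dissNumOn (hsB.trans hBA)

lemma IsMaxDissocOn.mem_of_nbrCount_eq_zero (hs : IsMaxDissocOn G A s) (hwA : w ∈ A)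
    (hw : nbrCount G s w = 0) : w ∈ s := by
  by_contra hws
  have hle := (hs.2.1.insert hw).card_le_dissNumOn (A := A) (by
    simpa using Set.insert_subset hwA hs.1)
  rw [Finset.card_insert_of_notMem hws, hs.2.2] at hle
  omega

lemma numMaxDissocOn_eq_add (G : SimpleGraph V) (A : Set V) (u : V) :
    numMaxDissocOn G A =
      numMaxDissocOnAway G A u + numMaxDissocOnDeg0 G A u + numMaxDissocOnDeg1 G A u := by
  unfold numMaxDissocOnAway numMaxDissocOnDeg0 numMaxDissocOnDeg1
  rw [← card_subtype_or_of_disjoint, ← card_subtype_or_of_disjoint]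
  · refine Nat.card_congr (Equiv.subtypeEquivRight fun s => ⟨fun hs => ?_, by tauto⟩)
    by_cases hu : u ∈ s
    · have hdeg := hs.2.1 u hu
      have : nbrCount G s u = 0 ∨ nbrCount G s u = 1 := by omega
      tauto
    · exact Or.inl (Or.inl ⟨hs, hu⟩)
  · simp only [Pi.disjoint_iff, Prop.disjoint_iff]
    grind
  · simp only [Pi.disjoint_iff, Prop.disjoint_iff]
    grind

lemma mbar_eq_card_subset (G : SimpleGraph V) (hBA : B ⊆ A) :
    mbar G A B = Nat.card {s : Finset V // IsMaxDissocOn G A s ∧ ↑s ⊆ B} := by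
  rw [mbar]
  split_ifs with hdiss
  · refine Nat.card_congr (Equiv.subtypeEquivRight fun s => ?_)
    rw [IsMaxDissocOn, IsMaxDissocOn, hdiss]
    exact ⟨fun ⟨hsB, hs⟩ => ⟨⟨hsB.trans hBA, hs⟩, hsB⟩, fun ⟨⟨_, hs⟩, hsB⟩ => ⟨hsB, hs⟩⟩
  · have : IsEmpty {s : Finset V // IsMaxDissocOn G A s ∧ ↑s ⊆ B} := by
      refine ⟨fun ⟨s, ⟨_, hs, hcard⟩, hsB⟩ => hdiss ?_⟩
      exact (dissNumOn_mono G hBA).antisymm (hcard ▸ hs.card_le_dissNumOn hsB)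
    rw [Nat.card_of_isEmpty]

lemma mbar_sdiff_singleton (G : SimpleGraph V) (A : Set V) (w : V) :
    mbar G A (A \ {w}) = numMaxDissocOnAway G A w := by
  rw [mbar_eq_card_subset G Set.sdiff_subset]
  refine Nat.card_congr (Equiv.subtypeEquivRight fun s => and_congr_right fun hs => ?_)
  simp [Set.subset_sdiff, hs.1]

lemma mbar_sdiff_neighborSet (G : SimpleGraph V) (hw : w ∈ A) :
    mbar G A (A \ G.neighborSet w) = numMaxDissocOnDeg0 G A w := by
  rw [mbar_eq_card_subset G Set.sdiff_subset]
  refine Nat.card_congr (Equiv.subtypeEquivRight fun s => and_congr_right fun hs => ?_)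
  have hsub : ↑s ⊆ A \ G.neighborSet w ↔ nbrCount G s w = 0 := by
    rw [Set.subset_sdiff, and_iff_right hs.1, nbrCount_eq_zero_iff, Set.disjoint_left]
    rfl
  rw [hsub]
  exact ⟨fun h => ⟨hs.mem_of_nbrCount_eq_zero hw h, h⟩, And.right⟩

variable {ι : Type*} [Fintype ι] {P : ι → Set V}

lemma dissNumOn_univ_eq_sum (hP : ∀ x, ∃! i, x ∈ P i) (hs : IsDissoc G s)
    (hmax : ∀ i, IsMaxDissocOn G (P i) (traceOn s (P i))) :
    dissNumOn G Set.univ = ∑ i, dissNumOn G (P i) := by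
  apply le_antisymm
  · obtain ⟨t, _, ht, hcard⟩ := exists_isMaxDissocOn G Set.univ
    rw [← hcard, card_eq_sum_card_traceOn hP t]
    exact Finset.sum_le_sum fun i _ =>
      (ht.mono (traceOn_subset _ _)).card_le_dissNumOn (coe_traceOn_subset _ _)
  · calc ∑ i, dissNumOn G (P i) = ∑ i, (traceOn s (P i)).card := by simp only [(hmax _).2.2]
      _ = s.card := (card_eq_sum_card_traceOn hP s).symm
      _ ≤ dissNumOn G Set.univ := hs.card_le_dissNumOn (Set.subset_univ _)

lemma isMaxDissocOn_univ_iff_forall_traceOn (hP : ∀ x, ∃! i, x ∈ P i)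
    (hsum : dissNumOn G Set.univ = ∑ i, dissNumOn G (P i)) :
    IsMaxDissocOn G Set.univ s ↔
      IsDissoc G s ∧ ∀ i, IsMaxDissocOn G (P i) (traceOn s (P i)) := by
  rw [IsMaxDissocOn, and_iff_right (Set.subset_univ _), hsum, card_eq_sum_card_traceOn hP s]
  refine and_congr_right fun hs => ?_
  have htrace (i : ι) : IsDissoc G (traceOn s (P i)) := hs.mono (traceOn_subset _ _)
  rw [Finset.sum_eq_sum_iff_of_le fun i _ =>
    (htrace i).card_le_dissNumOn (coe_traceOn_subset _ _)]
  simp [IsMaxDissocOn, coe_traceOn_subset, htrace]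

end DissNum

/-- The vertices of `G` are partitioned into a root `C` and branches `T i`, and the only edges
between different pieces are the edges joining `u ∈ C` to `v i ∈ T i`, one for each branch. The
index `none : Option ι` of the partition stands for the root. -/
structure IsPendantDecomposition {ι : Type*} (G : SimpleGraph V) (C : Set V) (T : ι → Set V)
    (u : V) (v : ι → V) : Prop where
  mem_root : u ∈ C
  mem_branch : ∀ i, v i ∈ T i
  adj : ∀ i, G.Adj u (v i)
  existsUnique_mem : ∀ x, ∃! o : Option ι, x ∈ o.elim C T
  eq_of_adj_branch : ∀ {i j x y}, x ∈ T i → y ∈ T j → G.Adj x y → i = j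
  eq_of_adj_root : ∀ {i x y}, x ∈ C → y ∈ T i → G.Adj x y → x = u ∧ y = v i

namespace IsPendantDecomposition

variable {ι : Type*} {G : SimpleGraph V} {C : Set V} {T : ι → Set V} {u : V} {v : ι → V}
  {s : Finset V} {w : V} {i : ι}

lemma nbrCount_of_mem_root [Fintype ι] (h : IsPendantDecomposition G C T u v) (hw : w ∈ C)
    (s : Finset V) :
    nbrCount G s w = nbrCount G (traceOn s C) w +
      if w = u then (Finset.univ.filter fun i => v i ∈ s).card else 0 := by
  have hbranch (i : ι) : nbrCount G (traceOn s (T i)) w = if v i ∈ s ∧ w = u then 1 else 0 := by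
    rw [nbrCount_eq_ite (b := v i) (p := w = u)]
    · simp [h.mem_branch i]
    · intro x hx
      have := h.adj i
      have := @h.eq_of_adj_root i w x hw (mem_traceOn.1 hx).2
      grind
  rw [nbrCount_eq_sum_nbrCount_traceOn h.existsUnique_mem, Fintype.sum_option]
  simp only [Option.elim, hbranch]
  split_ifs with hwu <;> simp [hwu]

lemma nbrCount_root_eq_zero_iff [Finite ι] (h : IsPendantDecomposition G C T u v) :
    nbrCount G s u = 0 ↔ nbrCount G (traceOn s C) u = 0 ∧ ∀ i, v i ∉ s := by
  cases nonempty_fintype ι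
  rw [h.nbrCount_of_mem_root h.mem_root, if_pos rfl]
  simp

lemma nbrCount_root_eq_one_iff [Finite ι] (h : IsPendantDecomposition G C T u v) :
    nbrCount G s u = 1 ↔ (nbrCount G (traceOn s C) u = 1 ∧ ∀ i, v i ∉ s) ∨
      ∃ j, nbrCount G (traceOn s C) u = 0 ∧ ∀ i, v i ∈ s ↔ i = j := by
  cases nonempty_fintype ι
  rw [h.nbrCount_of_mem_root h.mem_root, if_pos rfl, Nat.add_eq_one_iff, or_comm]
  simp [Finset.card_eq_one, Finset.ext_iff]

lemma nbrCount_of_mem_branch [Finite ι] (h : IsPendantDecomposition G C T u v) (hw : w ∈ T i)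
    (s : Finset V) :
    nbrCount G s w = nbrCount G (traceOn s (T i)) w + if u ∈ s ∧ w = v i then 1 else 0 := by
  cases nonempty_fintype ι
  have hroot : nbrCount G (traceOn s C) w = if u ∈ s ∧ w = v i then 1 else 0 := by
    rw [nbrCount_eq_ite (b := u) (p := w = v i)]
    · simp [h.mem_root]
    · intro x hx
      have := (h.adj i).symm
      have := @h.eq_of_adj_root i x w (mem_traceOn.1 hx).2 hw
      grind [G.adj_comm]
  rw [nbrCount_eq_sum_nbrCount_traceOn h.existsUnique_mem, Fintype.sum_option, add_comm]
  simp only [Option.elim, hroot]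
  rw [Fintype.sum_eq_single i fun j hj => nbrCount_eq_zero_iff.2 fun x hx hwx =>
    hj (h.eq_of_adj_branch hw (mem_traceOn.1 hx).2 hwx).symm]

lemma isDissoc_iff [Finite ι] (h : IsPendantDecomposition G C T u v) :
    IsDissoc G s ↔ IsDissoc G (traceOn s C) ∧ (∀ i, IsDissoc G (traceOn s (T i))) ∧
      (u ∈ s → nbrCount G s u ≤ 1 ∧ ∀ i, v i ∈ s → nbrCount G (traceOn s (T i)) (v i) = 0) := by
  cases nonempty_fintype ι
  constructor
  · refine fun hs => ⟨hs.mono (traceOn_subset _ _), fun i => hs.mono (traceOn_subset _ _),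
      fun hu => ⟨hs u hu, fun i hi => ?_⟩⟩
    have := hs (v i) hi
    rw [h.nbrCount_of_mem_branch (h.mem_branch i), if_pos ⟨hu, rfl⟩] at this
    omega
  · rintro ⟨hC, hT, hu⟩ w hw
    obtain ⟨_ | i, hwi, -⟩ := h.existsUnique_mem w
    · by_cases hwu : w = u
      · exact hwu ▸ (hu (hwu ▸ hw)).1
      · rw [h.nbrCount_of_mem_root hwi, if_neg hwu]
        exact hC w (mem_traceOn.2 ⟨hw, hwi⟩)
    · rw [h.nbrCount_of_mem_branch hwi]
      split_ifs with huw
      · rw [huw.2, (hu huw.1).2 i (huw.2 ▸ hw)]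
      · exact hT i w (mem_traceOn.2 ⟨hw, hwi⟩)

/-- The maximum dissociation sets of `T i` allowed when the unique neighbor of `u` is `v j`. -/
def IsBranchTrace (G : SimpleGraph V) (T : ι → Set V) (v : ι → V) (j i : ι) (t : Finset V) :
    Prop :=
  IsMaxDissocOn G (T i) t ∧ if i = j then v i ∈ t ∧ nbrCount G t (v i) = 0 else v i ∉ t

lemma prod_card_isBranchTrace [Fintype ι] [DecidableEq ι] (G : SimpleGraph V) (T : ι → Set V)
    (v : ι → V) (j : ι) :
    ∏ i, Nat.card {t // IsBranchTrace G T v j i t} = numMaxDissocOnDeg0 G (T j) (v j) *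
      ∏ i ∈ Finset.univ.erase j, numMaxDissocOnAway G (T i) (v i) := by
  rw [← Finset.mul_prod_erase _ _ (Finset.mem_univ j)]
  congr 1
  · simp [IsBranchTrace, numMaxDissocOnDeg0]
  · refine Finset.prod_congr rfl fun i hi => ?_
    simp [IsBranchTrace, numMaxDissocOnAway, Finset.ne_of_mem_erase hi]

variable [Finite V]

lemma isMaxDissocOn_univ_iff [Finite ι] (h : IsPendantDecomposition G C T u v)
    (hC : ∃ s, IsMaxDissocOn G C s ∧ u ∉ s) :
    IsMaxDissocOn G Set.univ s ↔ IsMaxDissocOn G C (traceOn s C) ∧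
      (∀ i, IsMaxDissocOn G (T i) (traceOn s (T i))) ∧
      (u ∈ s → nbrCount G s u ≤ 1 ∧ ∀ i, v i ∈ s → nbrCount G (traceOn s (T i)) (v i) = 0) := by
  cases nonempty_fintype ι
  have hsum : dissNumOn G Set.univ = ∑ o : Option ι, dissNumOn G (o.elim C T) := by
    obtain ⟨a, ha, hua⟩ := hC
    choose b hb using fun i => exists_isMaxDissocOn G (T i)
    have hmax (o : Option ι) : IsMaxDissocOn G (o.elim C T) (o.elim a b) := by
      cases o <;> simp [ha, hb]
    have htrace := traceOn_biUnion h.existsUnique_mem fun o => (hmax o).1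
    have huglue : u ∉ Finset.univ.biUnion fun o : Option ι => o.elim a b := fun hu =>
      hua ((htrace none).subset (mem_traceOn.2 ⟨hu, h.mem_root⟩))
    refine dissNumOn_univ_eq_sum h.existsUnique_mem (h.isDissoc_iff.2
      ⟨(htrace none).symm ▸ ha.2.1, fun i => (htrace (some i)).symm ▸ (hb i).2.1,
        fun hu => absurd hu huglue⟩) fun o => (htrace o).symm ▸ hmax o
  rw [isMaxDissocOn_univ_iff_forall_traceOn h.existsUnique_mem hsum, h.isDissoc_iff, Option.forall]
  simp only [Option.elim]
  exact ⟨fun hs => ⟨hs.2.1, hs.2.2, hs.1.2.2⟩,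
    fun hs => ⟨⟨hs.1.2.1, fun i => (hs.2.1 i).2.1, hs.2.2⟩, hs.1, hs.2.1⟩⟩

lemma numMaxDissocAway_eq [Fintype ι] (h : IsPendantDecomposition G C T u v)
    (hC : ∃ s, IsMaxDissocOn G C s ∧ u ∉ s) :
    numMaxDissocAway G u = numMaxDissocOnAway G C u * ∏ i, numMaxDissocOn G (T i) := by
  unfold numMaxDissocAway numMaxDissocOnAway numMaxDissocOn
  rw [← card_subtype_traceOn_and_forall_traceOn h.existsUnique_mem (fun _ ht => ht.1.1)
    fun _ _ ht => ht.1]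
  refine Nat.card_congr (Equiv.subtypeEquivRight fun s => ?_)
  rw [h.isMaxDissocOn_univ_iff hC, mem_traceOn_iff_of_mem h.mem_root]
  tauto

lemma numMaxDissocDeg0_eq [Fintype ι] (h : IsPendantDecomposition G C T u v)
    (hC : ∃ s, IsMaxDissocOn G C s ∧ u ∉ s) :
    numMaxDissocDeg0 G u = numMaxDissocOnDeg0 G C u * ∏ i, numMaxDissocOnAway G (T i) (v i) := by
  unfold numMaxDissocDeg0 numMaxDissocOnDeg0 numMaxDissocOnAway
  rw [← card_subtype_traceOn_and_forall_traceOn h.existsUnique_mem (fun _ ht => ht.1.1)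
    fun _ _ ht => ht.1.1]
  refine Nat.card_congr (Equiv.subtypeEquivRight fun s => ?_)
  rw [h.isMaxDissocOn_univ_iff hC, h.nbrCount_root_eq_zero_iff]
  simp only [mem_traceOn_iff_of_mem, h.mem_root, h.mem_branch]
  grind [h.nbrCount_root_eq_zero_iff (s := s)]

lemma isMaxDissocOn_univ_and_nbrCount_eq_one_iff [Finite ι]
    (h : IsPendantDecomposition G C T u v) (hC : ∃ s, IsMaxDissocOn G C s ∧ u ∉ s) :
    IsMaxDissocOn G Set.univ s ∧ u ∈ s ∧ nbrCount G s u = 1 ↔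
      ((IsMaxDissocOn G C (traceOn s C) ∧ u ∈ traceOn s C ∧ nbrCount G (traceOn s C) u = 1) ∧
        ∀ i, IsMaxDissocOn G (T i) (traceOn s (T i)) ∧ v i ∉ traceOn s (T i)) ∨
      ∃ j, (IsMaxDissocOn G C (traceOn s C) ∧ u ∈ traceOn s C ∧
          nbrCount G (traceOn s C) u = 0) ∧
        ∀ i, IsBranchTrace G T v j i (traceOn s (T i)) := by
  rw [h.isMaxDissocOn_univ_iff hC]
  simp only [IsBranchTrace, mem_traceOn_iff_of_mem, h.mem_root, h.mem_branch]
  constructor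
  · rintro ⟨⟨hsC, hsT, hadm⟩, hu, hdeg⟩
    rcases h.nbrCount_root_eq_one_iff.1 hdeg with ⟨h1, hv⟩ | ⟨j, h0, hv⟩
    · exact Or.inl ⟨⟨hsC, hu, h1⟩, fun i => ⟨hsT i, hv i⟩⟩
    · refine Or.inr ⟨j, ⟨hsC, hu, h0⟩, fun i => ⟨hsT i, ?_⟩⟩
      split_ifs with hij
      · exact ⟨(hv i).2 hij, (hadm hu).2 i ((hv i).2 hij)⟩
      · exact fun hi => hij ((hv i).1 hi)
  · rintro (⟨⟨hsC, hu, h1⟩, hv⟩ | ⟨j, ⟨hsC, hu, h0⟩, hv⟩)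
    · have hdeg := h.nbrCount_root_eq_one_iff.2 (Or.inl ⟨h1, fun i => (hv i).2⟩)
      exact ⟨⟨hsC, fun i => (hv i).1, fun _ => ⟨hdeg.le, by grind⟩⟩, hu, hdeg⟩
    · have hdeg := h.nbrCount_root_eq_one_iff.2 (Or.inr ⟨j, h0, by grind⟩)
      exact ⟨⟨hsC, fun i => (hv i).1, fun _ => ⟨hdeg.le, by grind⟩⟩, hu, hdeg⟩

lemma numMaxDissocDeg1_eq [Fintype ι] [DecidableEq ι] (h : IsPendantDecomposition G C T u v)
    (hC : ∃ s, IsMaxDissocOn G C s ∧ u ∉ s) :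
    numMaxDissocDeg1 G u =
      numMaxDissocOnDeg1 G C u * ∏ i, numMaxDissocOnAway G (T i) (v i) +
        numMaxDissocOnDeg0 G C u * ∑ j, numMaxDissocOnDeg0 G (T j) (v j) *
          ∏ i ∈ Finset.univ.erase j, numMaxDissocOnAway G (T i) (v i) := by
  rw [numMaxDissocDeg1, numMaxDissocOnDeg1,
    Nat.card_congr
      (Equiv.subtypeEquivRight fun s => h.isMaxDissocOn_univ_and_nbrCount_eq_one_iff hC),
    card_subtype_or_of_disjoint, card_subtype_exists_of_unique, Finset.mul_sum]
  · congr 1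
    · unfold numMaxDissocOnDeg1 numMaxDissocOnAway
      rw [← card_subtype_traceOn_and_forall_traceOn h.existsUnique_mem (fun _ ht => ht.1.1)
        fun _ _ ht => ht.1.1]
    · refine Finset.sum_congr rfl fun j _ => ?_
      rw [← prod_card_isBranchTrace, numMaxDissocOnDeg0]
      rw [← card_subtype_traceOn_and_forall_traceOn h.existsUnique_mem (fun _ ht => ht.1.1)
        fun _ _ ht => ht.1.1]
  · intro s i j hi hj
    have := (hi.2 i).2
    have := (hj.2 i).2
    grind
  · simp only [Pi.disjoint_iff, Prop.disjoint_iff]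
    grind

end IsPendantDecomposition

section Embedding

variable {W : Type*} {H : SimpleGraph W} {G : SimpleGraph V} {t : Finset W} {w : W}

lemma nbrCount_map (f : H ↪g G) (t : Finset W) (w : W) :
    nbrCount G (t.map f.toEmbedding) (f w) = nbrCount H t w := by
  simp only [nbrCount_eq_card_filter, Finset.filter_map, Finset.card_map]
  congr 1
  exact Finset.filter_congr fun x _ => f.map_adj_iff

lemma isDissoc_map_iff (f : H ↪g G) : IsDissoc G (t.map f.toEmbedding) ↔ IsDissoc H t := by
  simp [IsDissoc, nbrCount_map]

lemma dissNumOn_range (f : H ↪g G) : dissNumOn G (Set.range f) = dissNum H := by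
  unfold dissNum dissNumOn
  congr 1
  ext n
  constructor
  · rintro ⟨s, hs, hdiss, rfl⟩
    obtain ⟨t, rfl⟩ : ∃ t : Finset W, t.map f.toEmbedding = s := by
      obtain ⟨t, -, ht⟩ := Finset.subset_set_image_iff.1 (Set.image_univ ▸ hs)
      exact ⟨t, by rw [Finset.map_eq_image]; exact ht⟩
    exact ⟨t, Set.subset_univ _, (isDissoc_map_iff f).1 hdiss, (Finset.card_map _).symm⟩
  · rintro ⟨t, -, hdiss, rfl⟩
    exact ⟨t.map f.toEmbedding, by simp, (isDissoc_map_iff f).2 hdiss, Finset.card_map _⟩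

lemma isMaxDissocOn_range_map_iff (f : H ↪g G) :
    IsMaxDissocOn G (Set.range f) (t.map f.toEmbedding) ↔ IsMaxDissoc H t := by
  rw [IsMaxDissoc, IsMaxDissocOn, IsMaxDissocOn, isDissoc_map_iff, dissNumOn_range,
    Finset.card_map, dissNum]
  simp

lemma exists_isMaxDissoc_notMem [Finite W] (htrans : ∀ a b, ∃ φ : H ≃g H, φ a = b)
    (hw : 1 < (H.neighborSet w).ncard) (a : W) : ∃ t, IsMaxDissoc H t ∧ a ∉ t := by
  obtain ⟨t, ht⟩ := exists_isMaxDissocOn H Set.univ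
  obtain ⟨b, hb⟩ := ht.2.1.exists_notMem hw
  obtain ⟨φ, rfl⟩ := htrans b a
  refine ⟨t.map φ.toEmbedding.toEmbedding, ?_, mt (Finset.mem_map' φ.toEmbedding.toEmbedding).1 hb⟩
  have := (isMaxDissocOn_range_map_iff φ.toEmbedding).2 ht
  rwa [show Set.range φ.toEmbedding = Set.univ from φ.surjective.range_eq] at this

end Embedding

section CycleGraph

lemma exists_circulantGraph_iso_apply_eq {A : Type*} [AddCommGroup A] (S : Set A) (a b : A) :
    ∃ φ : SimpleGraph.circulantGraph S ≃g SimpleGraph.circulantGraph S, φ a = b :=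
  ⟨⟨Equiv.addRight (b - a), by simp⟩, by simp⟩

lemma ncard_neighborSet_cycleGraph {n : ℕ} (hn : 3 ≤ n) (i : Fin n) :
    ((SimpleGraph.cycleGraph n).neighborSet i).ncard = 2 := by
  obtain ⟨m, rfl⟩ := Nat.exists_eq_add_of_le' hn
  rw [← SimpleGraph.cycleGraph_degree_three_le (v := i), ← SimpleGraph.card_neighborSet_eq_degree,
    Set.ncard_eq_toFinset_card', Set.toFinset_card]

lemma exists_isMaxDissoc_cycleGraph_notMem {n : ℕ} (hn : 3 ≤ n) (i : Fin n) :
    ∃ t, IsMaxDissoc (SimpleGraph.cycleGraph n) t ∧ i ∉ t := by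
  refine exists_isMaxDissoc_notMem ?_ ((ncard_neighborSet_cycleGraph hn i).symm ▸ one_lt_two) i
  obtain ⟨m, rfl⟩ := Nat.exists_eq_add_of_le' hn
  rw [SimpleGraph.cycleGraph_eq_circulantGraph]
  exact exists_circulantGraph_iso_apply_eq _

variable {W : Type*} {H : SimpleGraph W} {G : SimpleGraph V}

lemma exists_copy_cycleGraph {x : V} {c : G.Walk x x} (hc : c.IsCycle) :
    ∃ f : SimpleGraph.Copy (SimpleGraph.cycleGraph c.length) G,
      Set.range f = {y | y ∈ c.support} := by
  have hadj (i j : Fin c.length) (hij : (j - i).val = 1) : G.Adj (c.getVert i) (c.getVert j) := by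
    have hsucc := c.adj_getVert_succ i.isLt
    obtain hj | ⟨hj, hi⟩ : (j : ℕ) = i + 1 ∨ (j : ℕ) = 0 ∧ (i : ℕ) + 1 = c.length := by
      have := i.isLt
      rcases le_or_gt i j with hle | hlt
      · have := Fin.sub_val_of_le hle
        have := Fin.le_def.1 hle
        omega
      · have := Fin.coe_sub_iff_lt.2 hlt
        omega
    · rwa [hj]
    · rw [hi, c.getVert_length] at hsucc
      rwa [hj, c.getVert_zero]
  refine ⟨⟨⟨fun i => c.getVert i, fun {i j} hij => ?_⟩, fun i j hij => ?_⟩, ?_⟩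
  · rcases SimpleGraph.cycleGraph_adj'.1 hij with h | h
    exacts [(hadj j i h).symm, hadj i j h]
  · have := i.isLt
    have := j.isLt
    exact Fin.ext (hc.getVert_injOn' (by rw [Set.mem_ofPred_eq]; omega)
      (by rw [Set.mem_ofPred_eq]; omega) hij)
  · ext y
    rw [Set.mem_ofPred_eq, SimpleGraph.Walk.mem_support_iff_exists_getVert]
    have := hc.three_le_length
    constructor
    · rintro ⟨i, rfl⟩
      exact ⟨i, rfl, i.isLt.le⟩
    · rintro ⟨n, rfl, hn⟩
      rcases hn.lt_or_eq with hlt | rfl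
      · exact ⟨⟨n, hlt⟩, rfl⟩
      · exact ⟨⟨0, by omega⟩, c.getVert_zero.trans c.getVert_length.symm⟩

variable [Finite V]

lemma neighborSet_eq_image_of_ncard_le {f : SimpleGraph.Copy H G} {a : W}
    (ha : (G.neighborSet (f a)).ncard ≤ (H.neighborSet a).ncard) :
    G.neighborSet (f a) = f '' H.neighborSet a := by
  refine (Set.eq_of_subset_of_ncard_le ?_ ?_).symm
  · rintro _ ⟨b, hb, rfl⟩
    exact f.toHom.map_adj hb
  · rwa [Set.ncard_image_of_injective (f := f) _ f.injective]

lemma exists_embedding_eq_copy {f : SimpleGraph.Copy H G} {a₀ : W}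
    (h : ∀ a ≠ a₀, (G.neighborSet (f a)).ncard ≤ (H.neighborSet a).ncard) :
    ∃ g : H ↪g G, ⇑g = f := by
  have hadj {a b : W} (ha : a ≠ a₀) (hab : G.Adj (f a) (f b)) : H.Adj a b := by
    have hb : f b ∈ f '' H.neighborSet a := neighborSet_eq_image_of_ncard_le (h a ha) ▸ hab
    exact f.injective.mem_set_image.1 hb
  refine ⟨⟨f.toEmbedding, fun {a b} => ⟨fun hab => ?_, fun hab => f.toHom.map_adj hab⟩⟩, rfl⟩
  by_cases ha : a = a₀
  · have hb : b ≠ a₀ := by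
      rintro rfl
      exact hab.ne (congrArg f ha)
    exact (hadj hb hab.symm).symm
  · exact hadj ha hab

lemma neighborSet_subset_support {x w : V} {c : G.Walk x x} (hc : c.IsCycle) (hw : w ∈ c.support)
    (hdeg : (G.neighborSet w).ncard ≤ 2) : G.neighborSet w ⊆ {y | y ∈ c.support} := by
  obtain ⟨f, hf⟩ := exists_copy_cycleGraph hc
  obtain ⟨i, rfl⟩ : w ∈ Set.range f := hf ▸ hw
  rw [← hf, neighborSet_eq_image_of_ncard_le
    (hdeg.trans_eq (ncard_neighborSet_cycleGraph hc.three_le_length i).symm)]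
  exact Set.image_subset_range _ _

lemma exists_isMaxDissocOn_support_notMem {x u : V} {c : G.Walk x x} (hc : c.IsCycle)
    (hu : u ∈ c.support) (hdeg : ∀ w ∈ c.support, w ≠ u → (G.neighborSet w).ncard ≤ 2) :
    ∃ s, IsMaxDissocOn G {y | y ∈ c.support} s ∧ u ∉ s := by
  obtain ⟨f, hf⟩ := exists_copy_cycleGraph hc
  obtain ⟨i, rfl⟩ : u ∈ Set.range f := hf ▸ hu
  obtain ⟨g, hg⟩ := exists_embedding_eq_copy (f := f) (a₀ := i) fun a ha =>
    (hdeg (f a) (hf.subset ⟨a, rfl⟩) (f.injective.ne ha)).trans_eq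
      (ncard_neighborSet_cycleGraph hc.three_le_length a).symm
  obtain ⟨t, ht, hit⟩ := exists_isMaxDissoc_cycleGraph_notMem hc.three_le_length i
  rw [← hf, ← hg]
  exact ⟨t.map g.toEmbedding, (isMaxDissocOn_range_map_iff g).2 ht,
    mt (Finset.mem_map' g.toEmbedding).1 hit⟩

end CycleGraph

section Tree

variable {G : SimpleGraph V} {u a b : V} {T : Set V}

lemma isTree_deleteEdges_of_mem_edges [Finite V] (hconn : G.Connected)
    (huni : G.edgeSet.ncard = Nat.card V) {x : V} {c : G.Walk x x} (hc : c.IsCycle)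
    (he : s(a, b) ∈ c.edges) : (G.deleteEdges {s(a, b)}).IsTree := by
  rw [SimpleGraph.isTree_iff_connected_and_card]
  refine ⟨hconn.connected_delete_edge_of_not_isBridge fun hbr =>
    hbr.notMem_edges_of_isCycle hc he, ?_⟩
  rw [SimpleGraph.edgeSet_deleteEdges, Nat.card_coe_set_eq, ← huni]
  exact Set.ncard_sdiff_singleton_add_one (c.edges_subset_edgeSet he) (Set.toFinite _)

lemma eq_of_adj_of_isAcyclic (hG : G.IsAcyclic) (hT : (G.induce T).Preconnected) (hu : u ∉ T)
    (ha : a ∈ T) (hb : b ∈ T) (hua : G.Adj u a) (hub : G.Adj u b) : a = b := by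
  obtain ⟨p, hp⟩ := (hT ⟨a, ha⟩ ⟨b, hb⟩).exists_isPath
  obtain ⟨q, hq, huq⟩ : ∃ q : G.Walk a b, q.IsPath ∧ u ∉ q.support := by
    refine ⟨p.map (SimpleGraph.Embedding.induce T).toHom, hp.map Subtype.val_injective, fun h => ?_⟩
    obtain ⟨y, -, rfl⟩ := List.mem_map.1 (SimpleGraph.Walk.support_map _ p ▸ h)
    exact hu y.2
  have hb_snd := hG.eq_snd_of_adj_start (hq.cons (h := hua) huq) hub
    (SimpleGraph.Walk.end_mem_support _)
  exact (hb_snd.trans (SimpleGraph.Walk.snd_cons _ _)).symm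

lemma induce_deleteEdges_of_notMem (hu : u ∉ T) (w : V) :
    (G.deleteEdges {s(u, w)}).induce T = G.induce T := by
  ext x y
  simp only [SimpleGraph.induce_adj, SimpleGraph.deleteEdges_adj, and_iff_left_iff_imp]
  have := x.2
  have := y.2
  grind

lemma eq_of_adj_of_isCycle [Finite V] (hconn : G.Connected)
    (huni : G.edgeSet.ncard = Nat.card V) {x : V} {c : G.Walk x x} (hc : c.IsCycle)
    (hT : (G.induce T).Preconnected) (hdisj : Disjoint T {y | y ∈ c.support}) (hu : u ∉ T)
    (ha : a ∈ T) (hb : b ∈ T) (hua : G.Adj u a) (hub : G.Adj u b) : a = b := by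
  obtain ⟨e, he⟩ := c.edges.exists_mem_of_ne_nil (by simp [hc.not_nil])
  obtain ⟨y, z⟩ := e
  have hyT : y ∉ T := hdisj.notMem_of_mem_right (c.fst_mem_support_of_mem_edges he)
  have hzT : z ∉ T := hdisj.notMem_of_mem_right (c.snd_mem_support_of_mem_edges he)
  have hadj {w : V} (hw : w ∈ T) (huw : G.Adj u w) : (G.deleteEdges {s(y, z)}).Adj u w := by
    rw [SimpleGraph.deleteEdges_adj]
    grind
  exact eq_of_adj_of_isAcyclic (isTree_deleteEdges_of_mem_edges hconn huni hc he).isAcyclic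
    (by rwa [induce_deleteEdges_of_notMem hyT]) hu ha hb (hadj ha hua) (hadj hb hub)

end Tree

section Components

variable {G : SimpleGraph V} {A S T : Set V} {x y : V}

lemma IsCompOf.preconnected (hT : IsCompOf G A T) : (G.induce T).Preconnected :=
  hT.2.2.1.preconnected

lemma IsCompOf.eq_of_connected_union (hS : IsCompOf G A S) (hT : IsCompOf G A T)
    (hconn : (G.induce (S ∪ T)).Connected) : S = T :=
  have hsub : S ∪ T ⊆ A := Set.union_subset hS.1 hT.1
  (hS.2.2.2 _ Set.subset_union_left hsub hconn).symm.trans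
    (hT.2.2.2 _ Set.subset_union_right hsub hconn)

lemma IsCompOf.eq_of_mem (hS : IsCompOf G A S) (hT : IsCompOf G A T) (hxS : x ∈ S)
    (hxT : x ∈ T) : S = T :=
  hS.eq_of_connected_union hT
    (SimpleGraph.induce_union_connected hS.preconnected hT.preconnected ⟨x, hxS, hxT⟩)

lemma IsCompOf.eq_of_adj (hS : IsCompOf G A S) (hT : IsCompOf G A T) (hx : x ∈ S) (hy : y ∈ T)
    (hxy : G.Adj x y) : S = T :=
  hS.eq_of_connected_union hT
    (SimpleGraph.connected_induce_union hS.preconnected hT.preconnected hx hy hxy)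

end Components

lemma isPendantDecomposition_support [Finite V] {ι : Type*} {G : SimpleGraph V}
    (hconn : G.Connected) (huni : G.edgeSet.ncard = Nat.card V) {x : V} {c : G.Walk x x}
    (hc : c.IsCycle) {u : V} (hu : u ∈ c.support)
    (hdeg : ∀ w ∈ c.support, w ≠ u → (G.neighborSet w).ncard ≤ 2) {T : ι → Set V}
    (hT : ∀ i, IsCompOf G {y | y ∈ c.support}ᶜ (T i)) (hTinj : Function.Injective T)
    (hcover : ⋃ i, T i = {y | y ∈ c.support}ᶜ) {v : ι → V} (hv : ∀ i, v i ∈ T i)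
    (hadj : ∀ i, G.Adj u (v i)) :
    IsPendantDecomposition G {y | y ∈ c.support} T u v where
  mem_root := hu
  mem_branch := hv
  adj := hadj
  existsUnique_mem y := by
    have hmem (i : ι) (hi : y ∈ T i) : y ∉ c.support := (hT i).1 hi
    have hinj (i j : ι) (hi : y ∈ T i) (hj : y ∈ T j) : i = j :=
      hTinj ((hT i).eq_of_mem (hT j) hi hj)
    by_cases hy : y ∈ c.support
    · exact ⟨none, hy, Option.forall.2 ⟨fun _ => rfl, fun i hi => absurd hy (hmem i hi)⟩⟩
    · obtain ⟨i, hi⟩ := Set.mem_iUnion.1 (hcover.superset hy)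
      exact ⟨some i, hi, Option.forall.2
        ⟨fun hy' => absurd hy' hy, fun j hj => congrArg some (hinj j i hj hi)⟩⟩
  eq_of_adj_branch hx hy hxy := hTinj ((hT _).eq_of_adj (hT _) hx hy hxy)
  eq_of_adj_root {i w y} hw hy hwy := by
    obtain rfl : w = u := by
      by_contra hwu
      exact (hT i).1 hy (neighborSet_subset_support hc hw (hdeg w hw hwu) hwy)
    exact ⟨rfl, eq_of_adj_of_isCycle hconn huni hc (hT i).preconnected
      (Set.subset_compl_iff_disjoint_right.1 (hT i).1) (fun hi => (hT i).1 hi hw) hy (hv i) hwy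
      (hadj i)⟩

theorem potted_vertex_decomposition_general [Finite V] {ι : Type*} [Fintype ι] [DecidableEq ι]
    {G : SimpleGraph V} {C : Set V} {T : ι → Set V} {u : V} {v : ι → V}
    (h : IsPendantDecomposition G C T u v) (hC : ∃ s, IsMaxDissocOn G C s ∧ u ∉ s) :
    numMaxDissoc G
        = numMaxDissocAway G u + numMaxDissocDeg0 G u + numMaxDissocDeg1 G u ∧
    numMaxDissocAway G u = numMaxDissocOnAway G C u * ∏ i, numMaxDissocOn G (T i) ∧
    numMaxDissocDeg0 G u = numMaxDissocOnDeg0 G C u * ∏ i, mbar G (T i) (T i \ {v i}) ∧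
    numMaxDissocDeg1 G u
        = numMaxDissocOnDeg1 G C u * ∏ i, mbar G (T i) (T i \ {v i})
          + numMaxDissocOnDeg0 G C u *
              ∑ j, mbar G (T j) (T j \ G.neighborSet (v j)) *
                ∏ i ∈ Finset.univ.erase j, mbar G (T i) (T i \ {v i}) := by
  simp only [mbar_sdiff_singleton, mbar_sdiff_neighborSet G (h.mem_branch _)]
  exact ⟨numMaxDissocOn_eq_add G Set.univ u, h.numMaxDissocAway_eq hC, h.numMaxDissocDeg0_eq hC,
    h.numMaxDissocDeg1_eq hC⟩

theorem potted_vertex_decomposition {V : Type*} [Fintype V] (G : SimpleGraph V) (k r : ℕ)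
    (hconn : G.Connected) (huni : G.edgeSet.ncard = Nat.card V)
    (v0 : V) (c : G.Walk v0 v0) (hc : c.IsCycle) (hck : c.length = k)
    (u : V) (hu : u ∈ c.support) (hudeg : 2 < (G.neighborSet u).ncard)
    (huuniq : ∀ w ∈ c.support, 2 < (G.neighborSet w).ncard → w = u)
    (T : Fin r → Set V)
    (hT : ∀ i, IsCompOf G {x | x ∈ c.support}ᶜ (T i))
    (hTinj : Function.Injective T)
    (hcover : (⋃ i, T i) = {x | x ∈ c.support}ᶜ)
    (v : Fin r → V) (hv : ∀ i, v i ∈ T i) (hadj : ∀ i, G.Adj u (v i)) :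
    numMaxDissoc G
        = numMaxDissocAway G u + numMaxDissocDeg0 G u + numMaxDissocDeg1 G u ∧
    numMaxDissocAway G u
        = numMaxDissocOnAway G {x | x ∈ c.support} u * ∏ i, numMaxDissocOn G (T i) ∧
    numMaxDissocDeg0 G u
        = numMaxDissocOnDeg0 G {x | x ∈ c.support} u * ∏ i, mbar G (T i) (T i \ {v i}) ∧
    numMaxDissocDeg1 G u
        = numMaxDissocOnDeg1 G {x | x ∈ c.support} u * ∏ i, mbar G (T i) (T i \ {v i})
          + numMaxDissocOnDeg0 G {x | x ∈ c.support} u *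
              ∑ j, mbar G (T j) (T j \ G.neighborSet (v j)) *
                ∏ i ∈ Finset.univ.erase j, mbar G (T i) (T i \ {v i}) := by
  have hdeg (w : V) (hw : w ∈ c.support) (hwu : w ≠ u) : (G.neighborSet w).ncard ≤ 2 :=
    not_lt.1 (mt (huuniq w hw) hwu)
  exact potted_vertex_decomposition_general
    (isPendantDecomposition_support hconn huni hc hu hdeg hT hTinj hcover hv hadj)
    (exists_isMaxDissocOn_support_notMem hc hu hdeg)
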